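/- For every permutation σ ∈ S₄, every connected component of the set BL_σ ⊂ Lo¹₄ is contractible. -/

import Mathlib

open Matrix

/-- The group `Lo¹_m` of real lower triangular `m × m` matrices with
all diagonal entries equal to `1`, viewed as a subset of the matrix space. -/
def Lo1 (m : ℕ) : Set (Matrix (Fin m) (Fin m) ℝ) :=
  {L | (∀ i, L i i = 1) ∧ ∀ i j : Fin m, i < j → L i j = 0}

/-- The set of invertible real upper triangular `m × m` matrices. -/
def UpInv (m : ℕ) : Set (Matrix (Fin m) (Fin m) ℝ) :=
  {U | (∀ i j : Fin m, j < i → U i j = 0) ∧ IsUnit U.det}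

/-- The permutation matrix of `σ`, with `(P_σ)_{i, σ(i)} = 1` and `0` otherwise. -/
def permMat (m : ℕ) (σ : Equiv.Perm (Fin m)) : Matrix (Fin m) (Fin m) ℝ :=
  fun i j => if σ i = j then 1 else 0

/-- The Bruhat cell `Bru_σ^GL = { U₀ P_σ U₁ : U₀, U₁ upper triangular invertible }`. -/
def Bru (m : ℕ) (σ : Equiv.Perm (Fin m)) : Set (Matrix (Fin m) (Fin m) ℝ) :=
  {M | ∃ U₀ ∈ UpInv m, ∃ U₁ ∈ UpInv m, M = U₀ * permMat m σ * U₁}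

/-- `BL_σ = Lo¹ ∩ Bru_σ^GL`. -/
def BL (m : ℕ) (σ : Equiv.Perm (Fin m)) : Set (Matrix (Fin m) (Fin m) ℝ) :=
  Lo1 m ∩ Bru m σ

/-!
A space is homotopy discrete when its identity is homotopic to a locally constant map; its connected
components are then contractible. Factoring out upper triangular matrices on the left identifies
`BL_σ` with the set of lower unitriangular matrices `L`, supported at the inversions of `σ`, for
which the trailing principal minors of `L P_σ` do not vanish. For `σ ∈ S₄` a change of coordinates
decouples these conditions into conditions `t ≠ 0` and `K_n(x) ≠ 0`, where `K_n` is a continuant.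

The continuant is the real part of a nowhere vanishing complex solution of the same recursion. The
variable `x₀` adds `arg (x₀ + w)` to the phase of that solution, where `w` lies in the upper
half-plane and depends on the other variables; as a function of `x₀`, this is monotone with range
`(0, π)`. For an open interval `V`, the set where the phase lies in `V` therefore has convex fibers
over the set where the phase in the other variables lies in `V - (0, π)`. By induction on the number
of variables, the sets `{phase ∈ V}` are homotopy discrete for all open `V`, among them
`{K_n ≠ 0}`, where the phase is not a zero of the cosine.
-/

/-- A space is homotopy discrete when its identity is homotopic to a locally constant map, that is,
when it is homotopy equivalent to a discrete space. -/
def HomotopyDiscrete (X : Type*) [TopologicalSpace X] : Prop :=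
  ∃ r : C(X, X), IsLocallyConstant r ∧ r.Homotopic (ContinuousMap.id X)

namespace HomotopyDiscrete

variable {X Y : Type*} [TopologicalSpace X] [TopologicalSpace Y]

theorem contractibleSpace_connectedComponent (h : HomotopyDiscrete X) (x : X) :
    ContractibleSpace (connectedComponent x) := by
  obtain ⟨r, hr, ⟨H⟩⟩ := h
  have H_mem : ∀ y ∈ connectedComponent x, ∀ t, H (t, y) ∈ connectedComponent x := by
    intro y hy t
    have path_preconnected : IsPreconnected (Set.range fun s => H (s, y)) :=
      isPreconnected_range (by fun_prop)
    rw [connectedComponent_eq hy]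
    exact path_preconnected.subset_connectedComponent ⟨1, H.apply_one y⟩ ⟨t, rfl⟩
  have r_mem : r x ∈ connectedComponent x := by
    simpa using H_mem x mem_connectedComponent 0
  have r_eq : ∀ y ∈ connectedComponent x, r y = r x := fun y hy =>
    hr.apply_eq_of_isPreconnected isPreconnected_connectedComponent hy mem_connectedComponent
  rw [contractible_iff_id_nullhomotopic]
  refine ⟨⟨r x, r_mem⟩, ContinuousMap.Homotopic.symm
    ⟨⟨⟨fun p => ⟨H (p.1, p.2.1), H_mem _ p.2.2 _⟩, by fun_prop⟩, fun y => ?_, fun y => ?_⟩⟩⟩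
  · exact Subtype.ext ((H.apply_zero y.1).trans (r_eq y.1 y.2))
  · exact Subtype.ext (H.apply_one y.1)

theorem of_comp_homotopic_id (h : HomotopyDiscrete Y) (f : C(X, Y)) (g : C(Y, X))
    (hgf : (g.comp f).Homotopic (ContinuousMap.id X)) : HomotopyDiscrete X := by
  obtain ⟨r, hr, hrid⟩ := h
  refine ⟨(g.comp r).comp f, (hr.comp g).comp_continuous f.continuous, .trans ?_ hgf⟩
  exact ((ContinuousMap.Homotopic.refl g).comp hrid).comp (.refl f)

theorem of_homeomorph (h : HomotopyDiscrete Y) (e : X ≃ₜ Y) : HomotopyDiscrete X :=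
  h.of_comp_homotopic_id ⟨e, e.continuous⟩ ⟨e.symm, e.symm.continuous⟩ <| by
    rw [show ContinuousMap.comp ⟨e.symm, e.symm.continuous⟩ ⟨e, e.continuous⟩ =
      ContinuousMap.id X from ContinuousMap.ext e.symm_apply_apply]

theorem of_leftInvOn {S : Set X} {T : Set Y} (hT : HomotopyDiscrete T) {f : X → Y} {g : Y → X}
    (hf : ContinuousOn f S) (hg : ContinuousOn g T) (hfS : Set.MapsTo f S T)
    (hgT : Set.MapsTo g T S) (hgf : Set.LeftInvOn g f S) : HomotopyDiscrete S := by
  refine hT.of_comp_homotopic_id ⟨hfS.restrict, hf.mapsToRestrict hfS⟩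
    ⟨hgT.restrict, hg.mapsToRestrict hgT⟩ ?_
  have comp_eq : ContinuousMap.comp ⟨hgT.restrict, hg.mapsToRestrict hgT⟩
      ⟨hfS.restrict, hf.mapsToRestrict hfS⟩ = ContinuousMap.id S := by
    ext x
    exact hgf x.2
  rw [comp_eq]

theorem of_discreteTopology [DiscreteTopology X] : HomotopyDiscrete X :=
  ⟨.id X, IsLocallyConstant.of_discrete _, .refl _⟩

theorem prod (hX : HomotopyDiscrete X) (hY : HomotopyDiscrete Y) : HomotopyDiscrete (X × Y) := by
  obtain ⟨r, hr, hrid⟩ := hX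
  obtain ⟨s, hs, hsid⟩ := hY
  exact ⟨r.prodMap s, (hr.comp_continuous continuous_fst).prodMk (hs.comp_continuous
    continuous_snd), hrid.prodMap hsid⟩

theorem pi {ι : Type*} [Finite ι] {Z : ι → Type*} [∀ i, TopologicalSpace (Z i)]
    (h : ∀ i, HomotopyDiscrete (Z i)) : HomotopyDiscrete (∀ i, Z i) := by
  choose r hr H using h
  refine ⟨.piMap r, IsLocallyConstant.iff_eventually_eq _ |>.2 fun z => ?_,
    ⟨.piMap fun i => (H i).some⟩⟩
  filter_upwards [Filter.eventually_all.2 fun i =>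
    (continuous_apply i).continuousAt.eventually ((hr i).eventually_eq (z i))] with y hy
  exact funext hy

theorem setProd {S : Set X} {T : Set Y} (hS : HomotopyDiscrete S) (hT : HomotopyDiscrete T) :
    HomotopyDiscrete ↥(S ×ˢ T) :=
  (hS.prod hT).of_homeomorph (Homeomorph.Set.prod S T)

theorem setPi {ι : Type*} [Finite ι] {Z : ι → Type*} [∀ i, TopologicalSpace (Z i)]
    {S : ∀ i, Set (Z i)} (h : ∀ i, HomotopyDiscrete (S i)) : HomotopyDiscrete ↥(Set.univ.pi S) :=
  (pi h).of_homeomorph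
    { Equiv.Set.univPi S with
      continuous_toFun := continuous_pi fun i =>
        ((continuous_apply i).comp continuous_subtype_val).subtype_mk _
      continuous_invFun := by unfold Equiv.Set.univPi; fun_prop }

theorem of_entries {κ ι R : Type*} [TopologicalSpace R] {S : Set (κ × ι → R)}
    (h : HomotopyDiscrete S) : HomotopyDiscrete {L : Matrix κ ι R | (fun p => L p.1 p.2) ∈ S} :=
  h.of_leftInvOn (f := fun L p => L p.1 p.2) (g := fun v => of fun i j => v (i, j))
    (by fun_prop) (by fun_prop) (fun _ hL => hL) (fun _ hv => hv) fun _ _ => rfl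

theorem sigma {ι : Type*} {Z : ι → Type*} [∀ i, TopologicalSpace (Z i)]
    (h : ∀ i, HomotopyDiscrete (Z i)) : HomotopyDiscrete (Σ i, Z i) := by
  choose r hr H using h
  have locallyConstant : IsLocallyConstant (Sigma.map id fun i => r i) := by
    refine (IsLocallyConstant.iff_eventually_eq _).2 fun ⟨i, z⟩ => ?_
    refine Sigma.nhds_mk i z ▸ Filter.eventually_map.2 ?_
    filter_upwards [(hr i).eventually_eq z] with y hy
    exact congrArg (Sigma.mk i) hy
  let K : C((Σ i, Z i) × unitInterval, Σ i, Z i) :=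
    ⟨fun p => Sigma.map id (fun i (q : Z i × unitInterval) => (H i).some q.swap)
      (Homeomorph.sigmaProdDistrib p), by fun_prop⟩
  refine ⟨⟨_, locallyConstant.continuous⟩, locallyConstant, ⟨⟨K.comp .prodSwap, ?_, ?_⟩⟩⟩
  · rintro ⟨i, z⟩
    exact congrArg (Sigma.mk i) ((H i).some.apply_zero z)
  · rintro ⟨i, z⟩
    exact congrArg (Sigma.mk i) ((H i).some.apply_one z)

theorem iUnion {ι : Type*} {A : ι → Set X} (hA : ∀ i, IsOpen (A i))
    (hdisj : Pairwise fun i j => Disjoint (A i) (A j)) (h : ∀ i, HomotopyDiscrete (A i)) :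
    HomotopyDiscrete (⋃ i, A i) := by
  have homeo : IsHomeomorph (Set.sigmaToiUnion A) := by
    refine ⟨?_, ?_, Set.sigmaToiUnion_bijective A hdisj⟩
    · exact continuous_sigma fun i => continuous_inclusion (Set.subset_iUnion A i)
    · exact isOpenMap_sigma.2 fun i => (hA i).isOpenMap_inclusion (Set.subset_iUnion A i)
  exact (sigma h).of_homeomorph (homeo.homeomorph _).symm

theorem of_convex_fibers {E F : Type*} [TopologicalSpace E] [AddCommGroup F] [Module ℝ F]
    [TopologicalSpace F] [ContinuousAdd F] [ContinuousSMul ℝ F] {S : Set (E × F)}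
    [NormalSpace (Prod.fst '' S)] [ParacompactSpace (Prod.fst '' S)]
    (hS : IsOpen S) (hconv : ∀ b, Convex ℝ {t | (b, t) ∈ S})
    (h : HomotopyDiscrete (Prod.fst '' S)) : HomotopyDiscrete S := by
  obtain ⟨s, hs⟩ := exists_continuous_forall_mem_convex_of_local_const (X := Prod.fst '' S)
    (t := fun b => {t | (b.1, t) ∈ S}) (fun b => hconv b.1) (by
      rintro ⟨_, ⟨b, t⟩, hbt, rfl⟩
      exact ⟨t, (hS.preimage (by fun_prop : Continuous fun y : Prod.fst '' S => (y.1, t))).mem_nhds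
        hbt⟩)
  let base : C(S, Prod.fst '' S) := ⟨fun p => ⟨p.1.1, p.1, p.2, rfl⟩, by fun_prop⟩
  have segment_mem (q : unitInterval × S) :
      (q.2.1.1, (1 - q.1 : ℝ) • s (base q.2) + (q.1 : ℝ) • q.2.1.2) ∈ S :=
    hconv q.2.1.1 (hs (base q.2)) q.2.2 (by linarith [q.1.2.2]) q.1.2.1 (by ring)
  refine h.of_comp_homotopic_id base ⟨fun b => ⟨(b, s b), hs b⟩, by fun_prop⟩
    ⟨⟨⟨fun q => ⟨_, segment_mem q⟩, by fun_prop⟩, fun p => ?_, fun p => ?_⟩⟩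
  · exact Subtype.ext (by simp [base])
  · exact Subtype.ext (by simp)

end HomotopyDiscrete

section Continuant

open Complex (arg I)
open scoped Real Pointwise

theorem arg_ofReal_add {w : ℂ} (hw : 0 < w.im) (t : ℝ) :
    arg (t + w) = π / 2 - Real.arctan ((t + w.re) / w.im) := by
  set z : ℂ := t + w with hz
  have re_eq : t + w.re = z.re := by simp [hz]
  have im_eq : w.im = z.im := by simp [hz]
  rw [re_eq, im_eq]
  rw [im_eq] at hw
  have norm_pos : 0 < ‖z‖ := norm_pos_iff.2 fun h => by simp [h] at hw
  have sin_pos : 0 < Real.sin (arg z) := by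
    rw [Complex.sin_arg]
    positivity
  have arg_pos : 0 < arg z := by
    refine (Complex.arg_nonneg_iff.2 hw.le).lt_of_ne fun h => ?_
    simp [← h] at sin_pos
  have arg_lt : arg z < π := Complex.arg_lt_pi_iff.2 (.inr hw.ne')
  have tan_eq : Real.tan (π / 2 - arg z) = z.re / z.im := by
    rw [Real.tan_pi_div_two_sub, Real.tan_eq_sin_div_cos, inv_div, ← Complex.norm_mul_cos_arg z,
      ← Complex.norm_mul_sin_arg z, mul_div_mul_left _ _ norm_pos.ne']
  rw [← tan_eq, Real.arctan_tan (by linarith) (by linarith), sub_sub_cancel]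

theorem antitone_arg_ofReal_add {w : ℂ} (hw : 0 < w.im) : Antitone fun t : ℝ => arg (t + w) := by
  intro s t hst
  simp only [arg_ofReal_add hw]
  gcongr

theorem range_arg_ofReal_add {w : ℂ} (hw : 0 < w.im) :
    Set.range (fun t : ℝ => arg (t + w)) = Set.Ioo 0 π := by
  ext θ
  simp only [Set.mem_range, arg_ofReal_add hw]
  constructor
  · rintro ⟨t, rfl⟩
    have arctan_mem := Real.arctan_mem_Ioo ((t + w.re) / w.im)
    constructor <;> linarith [arctan_mem.1, arctan_mem.2]
  · rintro ⟨h0, hπ⟩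
    refine ⟨Real.tan (π / 2 - θ) * w.im - w.re, ?_⟩
    rw [sub_add_cancel, mul_div_cancel_right₀ _ hw.ne',
      Real.arctan_tan (by linarith) (by linarith), sub_sub_cancel]

/-- The continuant `K_n(x₀, …, x_{n-1})`, that is, the determinant of the tridiagonal matrix with
diagonal `x` and off-diagonal entries `1`. -/
def continuant : ∀ {n : ℕ}, (Fin n → ℝ) → ℝ
  | 0, _ => 1
  | 1, x => x 0
  | _ + 2, x => x 0 * continuant (Fin.tail x) - continuant (Fin.tail (Fin.tail x))

theorem continuant_fin_two (x : Fin 2 → ℝ) : continuant x = x 0 * x 1 - 1 :=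
  rfl

theorem continuant_fin_three (x : Fin 3 → ℝ) : continuant x = x 0 * x 1 * x 2 - x 0 - x 2 := by
  calc continuant x = x 0 * (x 1 * x 2 - 1) - x 2 := rfl
    _ = x 0 * x 1 * x 2 - x 0 - x 2 := by ring

theorem continuant_fin_four (x : Fin 4 → ℝ) :
    continuant x = x 0 * x 1 * x 2 * x 3 - x 0 * x 1 - x 0 * x 3 - x 2 * x 3 + 1 := by
  calc continuant x = x 0 * (x 1 * (x 2 * x 3 - 1) - x 3) - (x 2 * x 3 - 1) := rfl
    _ = x 0 * x 1 * x 2 * x 3 - x 0 * x 1 - x 0 * x 3 - x 2 * x 3 + 1 := by ring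

namespace continuant

/-- The continued fraction `-1 / (x₀ - 1 / (x₁ - ⋯ - 1 / (x_{n-1} + i)))`, a point of the upper
half-plane. -/
noncomputable def slope : ∀ {n : ℕ}, (Fin n → ℝ) → ℂ
  | 0, _ => I
  | _ + 1, x => -(x 0 + slope (Fin.tail x))⁻¹

/-- The complex solution of the recursion of continuants whose real part is the continuant. -/
noncomputable def solution : ∀ {n : ℕ}, (Fin n → ℝ) → ℂ
  | 0, _ => 1
  | _ + 1, x => (x 0 + slope (Fin.tail x)) * solution (Fin.tail x)

/-- The continuous determination of the argument of `solution x` obtained by adding up the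
arguments, in `(0, π)`, of its successive factors. -/
noncomputable def phase : ∀ {n : ℕ}, (Fin n → ℝ) → ℝ
  | 0, _ => 0
  | _ + 1, x => phase (Fin.tail x) + arg (x 0 + slope (Fin.tail x))

theorem slope_im_pos : ∀ {n : ℕ} (x : Fin n → ℝ), 0 < (slope x).im
  | 0, _ => by simp [slope]
  | n + 1, x => by
    have im_pos : 0 < (x 0 + slope (Fin.tail x)).im := by simpa using slope_im_pos (Fin.tail x)
    have normSq_pos := Complex.normSq_pos.2 fun h => im_pos.ne' (congrArg Complex.im h)
    rw [slope, Complex.neg_im, Complex.inv_im, neg_div, neg_neg]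
    positivity

theorem ofReal_add_slope_ne_zero {n : ℕ} (t : ℝ) (x : Fin n → ℝ) : (t : ℂ) + slope x ≠ 0 :=
  fun h => (slope_im_pos x).ne' (by simpa using congrArg Complex.im h)

theorem continuous_slope : ∀ {n : ℕ}, Continuous (slope : (Fin n → ℝ) → ℂ)
  | 0 => continuous_const
  | n + 1 => by
    have tail_slope : Continuous fun x : Fin (n + 1) → ℝ => slope (Fin.tail x) :=
      continuous_slope.comp (by unfold Fin.tail; fun_prop)
    simp only [slope]
    exact (Continuous.inv₀ (by fun_prop) fun x : Fin (n + 1) → ℝ =>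
      ofReal_add_slope_ne_zero (x 0) _).neg

theorem continuous_arg_ofReal_add_slope {n : ℕ} :
    Continuous fun p : (Fin n → ℝ) × ℝ => arg (p.2 + slope p.1) := by
  have := continuous_slope (n := n)
  refine Complex.continuousOn_arg.comp_continuous (by fun_prop) fun p => .inr ?_
  simpa using (slope_im_pos p.1).ne'

theorem continuous_phase : ∀ {n : ℕ}, Continuous (phase : (Fin n → ℝ) → ℝ)
  | 0 => continuous_const
  | n + 1 => by
    have continuous_tail : Continuous (Fin.tail : (Fin (n + 1) → ℝ) → Fin n → ℝ) := by
      unfold Fin.tail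
      fun_prop
    simp only [phase]
    exact (continuous_phase.comp continuous_tail).add
      (continuous_arg_ofReal_add_slope.comp (continuous_tail.prodMk (continuous_apply 0)))

theorem solution_eq_norm_mul_exp : ∀ {n : ℕ} (x : Fin n → ℝ),
    solution x = ‖solution x‖ * Complex.exp (phase x * I)
  | 0, _ => by simp [solution, phase]
  | n + 1, x => by
    set z := x 0 + slope (Fin.tail x)
    calc solution x = z * solution (Fin.tail x) := rfl
      _ = (‖z‖ * Complex.exp (arg z * I)) *
          (‖solution (Fin.tail x)‖ * Complex.exp (phase (Fin.tail x) * I)) := by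
        rw [Complex.norm_mul_exp_arg_mul_I, ← solution_eq_norm_mul_exp]
      _ = ‖z * solution (Fin.tail x)‖ * Complex.exp ((phase (Fin.tail x) + arg z : ℝ) * I) := by
        rw [norm_mul, Complex.ofReal_add, add_mul, Complex.exp_add]
        push_cast
        ring

theorem solution_ne_zero : ∀ {n : ℕ} (x : Fin n → ℝ), solution x ≠ 0
  | 0, _ => one_ne_zero
  | _ + 1, x => mul_ne_zero (ofReal_add_slope_ne_zero _ _) (solution_ne_zero (Fin.tail x))

theorem slope_mul_solution {n : ℕ} (x : Fin (n + 1) → ℝ) :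
    slope x * solution x = -solution (Fin.tail x) := by
  have := ofReal_add_slope_ne_zero (x 0) (Fin.tail x)
  simp only [slope, solution]
  field_simp

theorem solution_re : ∀ {n : ℕ} (x : Fin n → ℝ), (solution x).re = continuant x
  | 0, _ => rfl
  | 1, x => by simp [solution, slope, continuant]
  | n + 2, x => by
    rw [solution, add_mul, slope_mul_solution, Complex.add_re, Complex.re_ofReal_mul,
      Complex.neg_re, solution_re, solution_re, continuant, sub_eq_add_neg]

theorem ne_zero_iff_cos_phase_ne_zero {n : ℕ} (x : Fin n → ℝ) :
    continuant x ≠ 0 ↔ Real.cos (phase x) ≠ 0 := by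
  have re_eq : continuant x = ‖solution x‖ * Real.cos (phase x) := by
    rw [← solution_re, congrArg Complex.re (solution_eq_norm_mul_exp x), Complex.re_ofReal_mul,
      Complex.exp_ofReal_mul_I_re]
  rw [re_eq, mul_ne_zero_iff, and_iff_right (norm_ne_zero_iff.2 (solution_ne_zero x))]

theorem isOpen_phase_add_arg_mem (n : ℕ) {V : Set ℝ} (hV : IsOpen V) :
    IsOpen {p : (Fin n → ℝ) × ℝ | phase p.1 + arg (p.2 + slope p.1) ∈ V} :=
  hV.preimage ((continuous_phase.comp continuous_fst).add continuous_arg_ofReal_add_slope)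

theorem image_fst_phase_add_arg_mem (n : ℕ) (V : Set ℝ) :
    Prod.fst '' {p : (Fin n → ℝ) × ℝ | phase p.1 + arg (p.2 + slope p.1) ∈ V} =
      {x | phase x ∈ V - Set.Ioo 0 π} := by
  ext x
  simp only [← range_arg_ofReal_add (slope_im_pos x), Set.mem_sub, Set.exists_range_iff]
  constructor
  · rintro ⟨⟨x, t⟩, h, rfl⟩
    exact ⟨_, h, t, add_sub_cancel_right _ _⟩
  · rintro ⟨v, hv, t, h⟩
    exact ⟨(x, t), by simpa [← h] using hv, rfl⟩

theorem homotopyDiscrete_phase_mem_succ {n : ℕ}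
    (ih : ∀ V : Set ℝ, IsOpen V → HomotopyDiscrete {x : Fin n → ℝ | phase x ∈ V}) {V : Set ℝ}
    (hV : IsOpen V) (hconn : V.OrdConnected) :
    HomotopyDiscrete {x : Fin (n + 1) → ℝ | phase x ∈ V} := by
  have total : HomotopyDiscrete
      {p : (Fin n → ℝ) × ℝ | phase p.1 + arg (p.2 + slope p.1) ∈ V} := by
    refine .of_convex_fibers (isOpen_phase_add_arg_mem n hV) (fun x => ?_) ?_
    · refine (hconn.preimage_anti (f := fun t : ℝ => phase x + arg (t + slope x)) ?_).convex
      exact (antitone_arg_ofReal_add (slope_im_pos x)).const_add _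
    · rw [image_fst_phase_add_arg_mem]
      exact ih _ hV.sub_right
  exact total.of_leftInvOn (f := fun x => (Fin.tail x, x 0)) (g := fun p => Fin.cons p.2 p.1)
    (by unfold Fin.tail; fun_prop) (by fun_prop) (fun x hx => hx) (fun p hp => hp)
    fun x _ => Fin.cons_self_tail x

theorem homotopyDiscrete_phase_mem : ∀ (n : ℕ) (V : Set ℝ), IsOpen V →
    HomotopyDiscrete {x : Fin n → ℝ | phase x ∈ V}
  | 0, V, _ => .of_discreteTopology
  | n + 1, V, hV => by
    have eq_iUnion : {x : Fin (n + 1) → ℝ | phase x ∈ V} =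
        ⋃ C : connectedComponentIn V '' V, {x | phase x ∈ C.1} := by
      ext x
      simp only [Set.mem_iUnion, Set.mem_ofPred_eq, Subtype.exists, Set.exists_mem_image,
        exists_prop]
      exact ⟨fun h => ⟨_, h, mem_connectedComponentIn h⟩,
        fun ⟨v, _, h⟩ => connectedComponentIn_subset V v h⟩
    rw [eq_iUnion]
    refine .iUnion ?_ ?_ ?_
    · rintro ⟨_, v, hv, rfl⟩
      exact hV.connectedComponentIn.preimage continuous_phase
    · rintro ⟨_, v, hv, rfl⟩ ⟨_, w, hw, rfl⟩ hne
      refine Disjoint.preimage _ (Set.disjoint_left.2 fun s hs hs' => hne ?_)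
      exact Subtype.ext ((connectedComponentIn_eq hs).trans (connectedComponentIn_eq hs').symm)
    · rintro ⟨_, v, hv, rfl⟩
      exact homotopyDiscrete_phase_mem_succ (homotopyDiscrete_phase_mem n)
        hV.connectedComponentIn isPreconnected_connectedComponentIn.ordConnected

theorem homotopyDiscrete_ne_zero (n : ℕ) :
    HomotopyDiscrete {x : Fin n → ℝ | continuant x ≠ 0} := by
  rw [show {x : Fin n → ℝ | continuant x ≠ 0} = {x | phase x ∈ {s | Real.cos s ≠ 0}} from
    Set.ext ne_zero_iff_cos_phase_ne_zero]
  exact homotopyDiscrete_phase_mem n _ (isOpen_ne_fun Real.continuous_cos continuous_const)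

end continuant

theorem homotopyDiscrete_compl_zero : HomotopyDiscrete ↥({0}ᶜ : Set ℝ) :=
  (continuant.homotopyDiscrete_ne_zero 1).of_leftInvOn (f := fun t _ => t) (g := fun x => x 0)
    (by fun_prop) (by fun_prop) (fun _ ht => ht) (fun _ hx => hx) fun _ _ => rfl

theorem homotopyDiscrete_mul_ne {κ : Type*} [Finite κ] {x y z : κ} (hxy : x ≠ y)
    (hxz : x ≠ z) (hyz : y ≠ z) {s : κ → Set ℝ} (hz : 0 ∉ s z) (hs : ∀ p, HomotopyDiscrete (s p)) :
    HomotopyDiscrete {v : κ → ℝ | v x * v y ≠ v z ∧ ∀ p, p ≠ x → p ≠ y → v p ∈ s p} := by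
  classical
  let s' (p : κ) : Set ℝ := if p = x ∨ p = y then {0} else s p
  have hs' (p : κ) : HomotopyDiscrete (s' p) := by
    by_cases hp : p = x ∨ p = y
    · rw [show s' p = {0} from if_pos hp]
      exact .of_discreteTopology
    · rw [show s' p = s p from if_neg hp]
      exact hs p
  refine ((continuant.homotopyDiscrete_ne_zero 2).setProd (.setPi hs')).of_leftInvOn
    (f := fun v => (![v x, v y / v z], fun p => if p = x ∨ p = y then 0 else v p))
    (g := fun q p => if p = x then q.1 0 else if p = y then q.1 1 * q.2 z else q.2 p) ?_ ?_ ?_ ?_ ?_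
  · refine ContinuousOn.prodMk (by fun_prop (disch := grind)) (continuousOn_pi.2 fun p => ?_)
    split_ifs <;> fun_prop
  · refine continuousOn_pi.2 fun p => ?_
    split_ifs <;> fun_prop
  · rintro v ⟨h, hv⟩
    simp only [Set.mem_prod, Set.mem_univ_pi, Set.mem_ofPred_eq, continuant_fin_two, cons_val, s']
    grind
  · rintro ⟨t, w⟩ ⟨h, hw⟩
    simp only [Set.mem_univ_pi, Set.mem_ofPred_eq, continuant_fin_two, s'] at h hw ⊢
    grind
  · rintro v ⟨-, hv⟩
    ext p
    simp only [cons_val]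
    grind

end Continuant

section IdentityRows

variable {ι R : Type*} [DecidableEq ι] [CommRing R]

/-- The matrix `M` with the rows indexed by `S` replaced by those of the identity matrix. Its
determinant is the principal minor of `M` complementary to `S`. -/
def identityRows (S : Finset ι) (M : Matrix ι ι R) : Matrix ι ι R :=
  of fun i j => if i ∈ S then (1 : Matrix ι ι R) i j else M i j

theorem identityRows_submatrix (S : Finset ι) (M : Matrix ι ι R) (σ : Equiv.Perm ι) :
    identityRows S (M.submatrix σ σ) = (identityRows (S.map σ.toEmbedding) M).submatrix σ σ := by
  ext i j
  simp [identityRows, one_apply]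

theorem blockTriangular_identityRows {α : Type*} [Preorder α] {b : ι → α} (S : Finset ι)
    {M : Matrix ι ι R} (hM : M.BlockTriangular b) : (identityRows S M).BlockTriangular b := by
  intro i j hij
  simp only [identityRows, of_apply, hM hij, blockTriangular_one hij, ite_self]

theorem identityRows_Iio_mul [Fintype ι] [LinearOrder ι] [LocallyFiniteOrderBot ι] (k : ι)
    {U : Matrix ι ι R} (hU : U.IsUpperTriangular) (M : Matrix ι ι R) :
    identityRows (Finset.Iio k) (U * M) =
      identityRows (Finset.Iio k) U * identityRows (Finset.Iio k) M := by
  ext i j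
  simp only [identityRows, mul_apply, of_apply, Finset.mem_Iio]
  split_ifs with hi
  · rw [Finset.sum_eq_single i _ (by simp)]
    · simp [hi]
    · intro r _ hr
      simp [one_apply_ne hr.symm]
  · refine Finset.sum_congr rfl fun r _ => ?_
    split_ifs with hr
    · simp [hU (hr.trans_le (not_lt.1 hi))]
    · rfl

theorem det_identityRows_Iio_succ {m : ℕ} (k : Fin m) (M : Matrix (Fin (m + 1)) (Fin (m + 1)) R) :
    (identityRows (Finset.Iio k.succ) M).det =
      (identityRows (Finset.Iio k) (M.submatrix Fin.succ Fin.succ)).det := by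
  have submatrix_eq : (identityRows (Finset.Iio k.succ) M).submatrix Fin.succ Fin.succ =
      identityRows (Finset.Iio k) (M.submatrix Fin.succ Fin.succ) := by
    ext i j
    simp [identityRows, one_apply]
  have row_zero (j : Fin (m + 1)) : identityRows (Finset.Iio k.succ) M 0 j =
      (1 : Matrix (Fin (m + 1)) (Fin (m + 1)) R) 0 j := by
    simp [identityRows]
  rw [det_succ_row_zero, Finset.sum_eq_single 0]
  · simp [row_zero, ← submatrix_eq]
  · intro j _ hj
    simp [row_zero, one_apply_ne hj.symm]
  · simp

end IdentityRows

section UpInv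

variable {m : ℕ} {U V L : Matrix (Fin m) (Fin m) ℝ}

theorem mul_mem_UpInv (hU : U ∈ UpInv m) (hV : V ∈ UpInv m) : U * V ∈ UpInv m :=
  ⟨fun _ _ h => BlockTriangular.mul (b := id) hU.1 hV.1 h, by simpa using hU.2.mul hV.2⟩

theorem inv_mem_UpInv (hU : U ∈ UpInv m) : U⁻¹ ∈ UpInv m := by
  have := invertibleOfIsUnitDet U hU.2
  exact ⟨fun _ _ h => blockTriangular_inv_of_blockTriangular (b := id) hU.1 h,
    isUnit_nonsing_inv_det U hU.2⟩

theorem identityRows_mem_UpInv (S : Finset (Fin m)) (hU : U ∈ UpInv m) :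
    identityRows S U ∈ UpInv m := by
  have upper : (identityRows S U).IsUpperTriangular := blockTriangular_identityRows S hU.1
  have diag_ne_zero : ∏ i, U i i ≠ 0 := det_of_isUpperTriangular hU.1 ▸ hU.2.ne_zero
  refine ⟨fun _ _ h => upper h, isUnit_iff_ne_zero.2 ?_⟩
  rw [det_of_isUpperTriangular upper, Finset.prod_ne_zero_iff]
  intro i hi
  by_cases hS : i ∈ S
  · simp [identityRows, hS]
  · simpa [identityRows, hS] using Finset.prod_ne_zero_iff.1 diag_ne_zero i hi

theorem det_of_mem_Lo1 (hL : L ∈ Lo1 m) : L.det = 1 := by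
  simp [det_of_isLowerTriangular L hL.2, hL.1]

theorem identityRows_mem_Lo1 (S : Finset (Fin m)) (hL : L ∈ Lo1 m) : identityRows S L ∈ Lo1 m :=
  ⟨fun i => by simp [identityRows, hL.1],
    fun _ _ h => blockTriangular_identityRows (b := OrderDual.toDual) S hL.2 h⟩

theorem mul_eq_self_of_mem_Lo1 (hU : U ∈ UpInv m) (hL : L ∈ Lo1 m) (hUL : U * L ∈ Lo1 m) :
    U * L = L := by
  have := invertibleOfIsUnitDet L (by simp [det_of_mem_Lo1 hL])
  have U_eq : U = U * L * L⁻¹ := by rw [mul_assoc, mul_inv_of_invertible, mul_one]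
  have lower : U.IsLowerTriangular := by
    rw [U_eq]
    exact BlockTriangular.mul hUL.2 (blockTriangular_inv_of_blockTriangular hL.2)
  have diag : U = diagonal fun i => U i i := by
    ext i j
    rcases lt_trichotomy i j with h | rfl | h
    · rw [diagonal_apply_ne _ h.ne, lower h]
    · rw [diagonal_apply_eq]
    · rw [diagonal_apply_ne _ h.ne', hU.1 i j h]
  have diag_one (i : Fin m) : U i i = 1 := by
    have := hUL.1 i
    rwa [diag, diagonal_mul, hL.1, mul_one] at this
  rw [diag, funext diag_one, diagonal_one, one_mul]

end UpInv

section LowerFactor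

variable {m : ℕ} {M U L : Matrix (Fin m) (Fin m) ℝ}

/-- A matrix is trailing regular when its trailing principal minors do not vanish, so that it is the
product of an upper triangular and a lower unitriangular matrix. -/
def TrailingRegular (M : Matrix (Fin m) (Fin m) ℝ) : Prop :=
  ∀ k, IsUnit (identityRows (Finset.Iio k) M).det

/-- The upper triangular matrix carrying a trailing regular `M` to a lower unitriangular matrix. -/
noncomputable def upperFactor (M : Matrix (Fin m) (Fin m) ℝ) : Matrix (Fin m) (Fin m) ℝ :=
  of fun i r => if i ≤ r then (identityRows (Finset.Iio i) M)⁻¹ i r else 0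

/-- The lower unitriangular factor of a trailing regular matrix. -/
noncomputable def lowerFactor (M : Matrix (Fin m) (Fin m) ℝ) : Matrix (Fin m) (Fin m) ℝ :=
  upperFactor M * M

theorem TrailingRegular.lowerFactor_apply (hM : TrailingRegular M) (i j : Fin m) :
    lowerFactor M i j = (1 : Matrix (Fin m) (Fin m) ℝ) i j -
      if j < i then (identityRows (Finset.Iio i) M)⁻¹ i j else 0 := by
  rw [eq_sub_iff_add_eq, ← nonsing_inv_mul _ (hM i)]
  have column : (if j < i then (identityRows (Finset.Iio i) M)⁻¹ i j else 0) =
      ∑ r, (identityRows (Finset.Iio i) M)⁻¹ i r *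
        if r < i then (1 : Matrix (Fin m) (Fin m) ℝ) r j else 0 := by
    rw [Finset.sum_eq_single j (fun r _ hr => by simp [one_apply_ne hr]) (by simp)]
    simp
  rw [column]
  simp only [lowerFactor, upperFactor, mul_apply, of_apply, ← Finset.sum_add_distrib]
  refine Finset.sum_congr rfl fun r _ => ?_
  rcases lt_or_ge r i with h | h
  · simp [identityRows, h, h.not_ge]
  · simp [identityRows, h, h.not_gt]

theorem TrailingRegular.lowerFactor_mem_Lo1 (hM : TrailingRegular M) : lowerFactor M ∈ Lo1 m := by
  constructor
  · intro i
    simp [hM.lowerFactor_apply]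
  · intro i j hij
    simp [hM.lowerFactor_apply, hij.ne, hij.not_gt]

theorem TrailingRegular.upperFactor_mem_UpInv (hM : TrailingRegular M) :
    upperFactor M ∈ UpInv m := by
  refine ⟨fun i j hij => if_neg hij.not_ge, IsUnit.of_mul_eq_one M.det ?_⟩
  rw [← det_mul, ← lowerFactor, det_of_mem_Lo1 hM.lowerFactor_mem_Lo1]

theorem TrailingRegular.mul_left (hU : U ∈ UpInv m) (hM : TrailingRegular M) :
    TrailingRegular (U * M) := by
  intro k
  rw [identityRows_Iio_mul k hU.1, det_mul]
  exact (identityRows_mem_UpInv _ hU).2.mul (hM k)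

theorem TrailingRegular.of_mem_Lo1 (hL : L ∈ Lo1 m) : TrailingRegular L := by
  intro k
  rw [det_of_mem_Lo1 (identityRows_mem_Lo1 _ hL)]
  exact isUnit_one

theorem TrailingRegular.submatrix_of_mem_UpInv (hU : U ∈ UpInv m) (σ : Equiv.Perm (Fin m)) :
    TrailingRegular (U.submatrix σ σ) := by
  intro k
  rw [identityRows_submatrix, det_submatrix_equiv_self]
  exact (identityRows_mem_UpInv _ hU).2

theorem lowerFactor_mul_of_mem_Lo1 (hU : U ∈ UpInv m) (hL : L ∈ Lo1 m) :
    lowerFactor (U * L) = L := by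
  have regular : TrailingRegular (U * L) := .mul_left hU (.of_mem_Lo1 hL)
  have mem := regular.lowerFactor_mem_Lo1
  rw [lowerFactor, ← mul_assoc] at mem ⊢
  exact mul_eq_self_of_mem_Lo1 (mul_mem_UpInv regular.upperFactor_mem_UpInv hU) hL mem

theorem TrailingRegular.lowerFactor_mul (hU : U ∈ UpInv m) (hM : TrailingRegular M) :
    lowerFactor (U * M) = lowerFactor M := by
  have hV := inv_mem_UpInv hM.upperFactor_mem_UpInv
  have M_eq : M = (upperFactor M)⁻¹ * lowerFactor M :=
    (nonsing_inv_mul_cancel_left _ _ hM.upperFactor_mem_UpInv.2).symm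
  conv_lhs => rw [M_eq, ← mul_assoc]
  exact lowerFactor_mul_of_mem_Lo1 (mul_mem_UpInv hU hV) hM.lowerFactor_mem_Lo1

theorem continuousOn_lowerFactor :
    ContinuousOn (lowerFactor (m := m)) {M | TrailingRegular M} := by
  have continuous_identityRows (k : Fin m) :
      Continuous fun M : Matrix (Fin m) (Fin m) ℝ => identityRows (Finset.Iio k) M := by
    refine continuous_matrix fun i j => ?_
    by_cases hi : i ∈ Finset.Iio k
    · simpa only [identityRows, of_apply, if_pos hi] using continuous_const
    · simpa only [identityRows, of_apply, if_neg hi, id_eq] using continuous_id.matrix_elem i j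
  have continuousOn_inv (k : Fin m) : ContinuousOn
      (fun M : Matrix (Fin m) (Fin m) ℝ => (identityRows (Finset.Iio k) M)⁻¹)
      {M | TrailingRegular M} := fun M hM =>
    ((continuousAt_matrix_inv _ (NormedRing.inverse_continuousAt (hM k).unit)).comp
      (continuous_identityRows k).continuousAt).continuousWithinAt
  refine ContinuousOn.congr (f := fun M => of fun i j => (1 : Matrix (Fin m) (Fin m) ℝ) i j -
    if j < i then (identityRows (Finset.Iio i) M)⁻¹ i j else 0) ?_ fun M hM => ?_
  · refine continuousOn_pi.2 fun i => continuousOn_pi.2 fun j => continuousOn_const.sub ?_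
    split_ifs
    · exact (continuous_apply_apply i j).comp_continuousOn (continuousOn_inv i)
    · exact continuousOn_const
  · ext i j
    exact hM.lowerFactor_apply i j

theorem trailingRegular_zero (M : Matrix (Fin 0) (Fin 0) ℝ) : TrailingRegular M :=
  fun k => k.elim0

theorem trailingRegular_succ_iff {m : ℕ} {M : Matrix (Fin (m + 1)) (Fin (m + 1)) ℝ} :
    TrailingRegular M ↔ IsUnit M.det ∧ TrailingRegular (M.submatrix Fin.succ Fin.succ) := by
  have minor_zero : identityRows (Finset.Iio 0) M = M := by
    ext i j
    simp [identityRows]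
  simp only [TrailingRegular, Fin.forall_fin_succ, minor_zero, det_identityRows_Iio_succ]

end LowerFactor

section BruhatChart

variable {m : ℕ} {L : Matrix (Fin m) (Fin m) ℝ} {σ : Equiv.Perm (Fin m)}

/-- A chart of `BL m σ`: the lower unitriangular matrices `L` in `P_σ Up P_σ⁻¹`, that is, those that
differ from the identity only at the inversions of `σ`, for which `L P_σ` is trailing regular. -/
def bruhatChart (m : ℕ) (σ : Equiv.Perm (Fin m)) : Set (Matrix (Fin m) (Fin m) ℝ) :=
  {L | (∀ i j, ¬(j < i ∧ σ i < σ j) → L i j = (1 : Matrix (Fin m) (Fin m) ℝ) i j) ∧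
    TrailingRegular (L.submatrix id σ.symm)}

theorem mem_Lo1_of_eq_one_off_inversions
    (hL : ∀ i j, ¬(j < i ∧ σ i < σ j) → L i j = (1 : Matrix (Fin m) (Fin m) ℝ) i j) :
    L ∈ Lo1 m := by
  refine ⟨fun i => ?_, fun i j hij => ?_⟩
  · rw [hL i i (by simp), one_apply_eq]
  · rw [hL i j (by simp [hij.not_gt]), one_apply_ne hij.ne]

theorem permMat_mul (M : Matrix (Fin m) (Fin m) ℝ) : permMat m σ * M = M.submatrix σ id := by
  ext i j
  simp [permMat, mul_apply]

theorem submatrix_symm_mem_UpInv (hL : L ∈ bruhatChart m σ) :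
    L.submatrix σ.symm σ.symm ∈ UpInv m := by
  refine ⟨fun i j hij => ?_, ?_⟩
  · rw [submatrix_apply, hL.1 _ _ (by simp [hij.le]), one_apply_ne (by simpa using hij.ne')]
  · simp [det_submatrix_equiv_self, det_of_mem_Lo1 (mem_Lo1_of_eq_one_off_inversions hL.1)]

theorem submatrix_id_eq_mul (hL : L ∈ BL m σ) :
    ∃ U ∈ UpInv m, ∃ V ∈ UpInv m, L.submatrix id σ = U * V.submatrix σ σ := by
  obtain ⟨-, U, hU, V, hV, rfl⟩ := hL
  refine ⟨U, hU, V, hV, ?_⟩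
  rw [mul_assoc, permMat_mul]
  rfl

theorem lowerFactor_submatrix_apply_eq_zero {U : Matrix (Fin m) (Fin m) ℝ} (hU : U ∈ UpInv m)
    {i j : Fin m} (hij : j < i) (hσ : σ j < σ i) : lowerFactor (U.submatrix σ σ) i j = 0 := by
  rw [(TrailingRegular.submatrix_of_mem_UpInv hU σ).lowerFactor_apply, one_apply_ne hij.ne',
    if_pos hij, zero_sub, neg_eq_zero, identityRows_submatrix, inv_submatrix_equiv]
  exact (inv_mem_UpInv (identityRows_mem_UpInv _ hU)).1 _ _ hσ

theorem trailingRegular_submatrix_of_mem_BL (hL : L ∈ BL m σ) :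
    TrailingRegular (L.submatrix id σ) := by
  obtain ⟨U, hU, V, hV, L_eq⟩ := submatrix_id_eq_mul hL
  rw [L_eq]
  exact .mul_left hU (.submatrix_of_mem_UpInv hV σ)

theorem lowerFactor_submatrix_submatrix_symm (hL : L ∈ BL m σ) :
    ∃ U ∈ UpInv m, (lowerFactor (L.submatrix id σ)).submatrix id σ.symm = U * L := by
  refine ⟨_, (trailingRegular_submatrix_of_mem_BL hL).upperFactor_mem_UpInv, ?_⟩
  rw [lowerFactor, submatrix_mul _ _ _ id _ Function.bijective_id]
  simp

theorem lowerFactor_mem_bruhatChart (hL : L ∈ BL m σ) :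
    lowerFactor (L.submatrix id σ) ∈ bruhatChart m σ := by
  have mem_Lo1 := (trailingRegular_submatrix_of_mem_BL hL).lowerFactor_mem_Lo1
  refine ⟨fun i j hinv => ?_, ?_⟩
  · rcases lt_trichotomy i j with hij | rfl | hij
    · rw [mem_Lo1.2 i j hij, one_apply_ne hij.ne]
    · rw [mem_Lo1.1 i, one_apply_eq]
    · obtain ⟨U, hU, V, hV, L_eq⟩ := submatrix_id_eq_mul hL
      have hσ : σ j < σ i := lt_of_le_of_ne (by simpa [hij] using hinv) (by simpa using hij.ne)
      rw [L_eq, (TrailingRegular.submatrix_of_mem_UpInv hV σ).lowerFactor_mul hU,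
        lowerFactor_submatrix_apply_eq_zero hV hij hσ, one_apply_ne hij.ne']
  · obtain ⟨U, hU, L_eq⟩ := lowerFactor_submatrix_submatrix_symm hL
    rw [L_eq]
    exact .mul_left hU (.of_mem_Lo1 hL.1)

theorem lowerFactor_mem_BL (hL : L ∈ bruhatChart m σ) :
    lowerFactor (L.submatrix id σ.symm) ∈ BL m σ := by
  refine ⟨hL.2.lowerFactor_mem_Lo1, _, hL.2.upperFactor_mem_UpInv, _,
    submatrix_symm_mem_UpInv hL, ?_⟩
  rw [mul_assoc, permMat_mul]
  simp [lowerFactor]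

theorem homotopyDiscrete_BL_of_bruhatChart (h : HomotopyDiscrete (bruhatChart m σ)) :
    HomotopyDiscrete (BL m σ) := by
  refine h.of_leftInvOn (f := fun L => lowerFactor (L.submatrix id σ))
    (g := fun L => lowerFactor (L.submatrix id σ.symm)) ?_ ?_
    (fun L hL => lowerFactor_mem_bruhatChart hL) (fun L hL => lowerFactor_mem_BL hL) ?_
  · exact continuousOn_lowerFactor.comp (by fun_prop) fun L hL =>
      trailingRegular_submatrix_of_mem_BL hL
  · exact continuousOn_lowerFactor.comp (by fun_prop) fun L hL => hL.2
  · intro L hL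
    obtain ⟨U, hU, L_eq⟩ := lowerFactor_submatrix_submatrix_symm hL
    simp only [L_eq]
    exact lowerFactor_mul_of_mem_Lo1 hU hL.1

end BruhatChart

/-- The values allowed at the entry `p` of a lower unitriangular matrix whose off-diagonal support
is exactly the set of inversions of `σ`. -/
def nonzeroAtInversions {m : ℕ} (σ : Equiv.Perm (Fin m)) (p : Fin m × Fin m) : Set ℝ :=
  if p.1 = p.2 then {1} else if p.2 < p.1 ∧ σ p.1 < σ p.2 then {0}ᶜ else {0}

theorem homotopyDiscrete_nonzeroAtInversions {m : ℕ} (σ : Equiv.Perm (Fin m)) (p : Fin m × Fin m) :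
    HomotopyDiscrete (nonzeroAtInversions σ p) := by
  by_cases diag : p.1 = p.2
  · rw [nonzeroAtInversions, if_pos diag]
    exact .of_discreteTopology
  by_cases inversion : p.2 < p.1 ∧ σ p.1 < σ p.2
  · rw [nonzeroAtInversions, if_neg diag, if_pos inversion]
    exact homotopyDiscrete_compl_zero
  · rw [nonzeroAtInversions, if_neg diag, if_neg inversion]
    exact .of_discreteTopology

/-- The occurrences of the pattern `321` in `σ`, as triples of positions. -/
def patterns321 {m : ℕ} (σ : Equiv.Perm (Fin m)) : Finset (Fin m × Fin m × Fin m) :=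
  {p | p.1 < p.2.1 ∧ p.2.1 < p.2.2 ∧ σ p.2.2 < σ p.2.1 ∧ σ p.2.1 < σ p.1}

section Four

variable {σ : Equiv.Perm (Fin 4)} {L : Matrix (Fin 4) (Fin 4) ℝ}

theorem mem_bruhatChart_four_iff :
    L ∈ bruhatChart 4 σ ↔
      (∀ i j, ¬(j < i ∧ σ i < σ j) → L i j = (1 : Matrix (Fin 4) (Fin 4) ℝ) i j) ∧
      det !![L 1 (σ.symm 1), L 1 (σ.symm 2), L 1 (σ.symm 3);
        L 2 (σ.symm 1), L 2 (σ.symm 2), L 2 (σ.symm 3);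
        L 3 (σ.symm 1), L 3 (σ.symm 2), L 3 (σ.symm 3)] ≠ 0 ∧
      det !![L 2 (σ.symm 2), L 2 (σ.symm 3); L 3 (σ.symm 2), L 3 (σ.symm 3)] ≠ 0 ∧
      L 3 (σ.symm 3) ≠ 0 := by
  refine and_congr_right fun support => ?_
  have det_unit : IsUnit (L.submatrix id σ.symm).det := by
    rw [det_permute', det_of_mem_Lo1 (mem_Lo1_of_eq_one_off_inversions support), mul_one]
    exact (Equiv.Perm.sign σ.symm).isUnit.map (Int.castRingHom ℝ)
  simp only [trailingRegular_succ_iff, det_unit, true_and, trailingRegular_zero, and_true,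
    isUnit_iff_ne_zero, submatrix_submatrix]
  simp [det_fin_three, det_fin_two]

set_option maxRecDepth 10000 in
theorem words_of_patterns321_eq_empty : ∀ {σ : Equiv.Perm (Fin 4)}, patterns321 σ = ∅ →
    (⇑σ, ⇑σ.symm) ∈ [(![0, 1, 2, 3], ![0, 1, 2, 3]), (![0, 1, 3, 2], ![0, 1, 3, 2]),
      (![0, 2, 1, 3], ![0, 2, 1, 3]), (![1, 0, 2, 3], ![1, 0, 2, 3]),
      (![1, 0, 3, 2], ![1, 0, 3, 2]), (![0, 2, 3, 1], ![0, 3, 1, 2]),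
      (![0, 3, 1, 2], ![0, 2, 3, 1]), (![1, 2, 0, 3], ![2, 0, 1, 3]),
      (![2, 0, 1, 3], ![1, 2, 0, 3]), (![1, 2, 3, 0], ![3, 0, 1, 2]),
      (![3, 0, 1, 2], ![1, 2, 3, 0]), (![1, 3, 0, 2], ![2, 0, 3, 1]),
      (![2, 0, 3, 1], ![1, 3, 0, 2]), (![2, 3, 0, 1], ![2, 3, 0, 1])] := by
  decide

set_option maxRecDepth 10000 in
theorem words_of_patterns321_eq_singleton : ∀ {σ : Equiv.Perm (Fin 4)} {i j k : Fin 4},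
    patterns321 σ = {(i, j, k)} → (⇑σ, ⇑σ.symm, i, j, k) ∈
      [(![0, 3, 2, 1], ![0, 3, 2, 1], 1, 2, 3), (![2, 1, 0, 3], ![2, 1, 0, 3], 0, 1, 2),
        (![1, 3, 2, 0], ![3, 0, 2, 1], 1, 2, 3), (![2, 1, 3, 0], ![3, 1, 0, 2], 0, 1, 3),
        (![3, 0, 2, 1], ![1, 3, 2, 0], 0, 2, 3), (![3, 1, 0, 2], ![2, 1, 3, 0], 0, 1, 2)] := by
  decide

theorem word_of_two_le_card_patterns321 : ∀ {σ : Equiv.Perm (Fin 4)}, 2 ≤ (patterns321 σ).card →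
    ⇑σ ∈ [![3, 1, 2, 0], ![2, 3, 1, 0], ![3, 2, 0, 1], ![3, 2, 1, 0]] := by
  decide

theorem mem_bruhatChart_four_iff_of_patterns321_eq_empty (h321 : patterns321 σ = ∅)
    (h3412 : ⇑σ ≠ ![2, 3, 0, 1]) :
    L ∈ bruhatChart 4 σ ↔ ∀ p, L p.1 p.2 ∈ nonzeroAtInversions σ p := by
  have words := words_of_patterns321_eq_empty h321
  simp only [List.mem_cons, Prod.mk.injEq, h3412, false_and, List.not_mem_nil, or_false] at words
  rw [mem_bruhatChart_four_iff]
  rcases words with ⟨hσ, hτ⟩ | ⟨hσ, hτ⟩ | ⟨hσ, hτ⟩ | ⟨hσ, hτ⟩ | ⟨hσ, hτ⟩ | ⟨hσ, hτ⟩ | ⟨hσ, hτ⟩ |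
    ⟨hσ, hτ⟩ | ⟨hσ, hτ⟩ | ⟨hσ, hτ⟩ | ⟨hσ, hτ⟩ | ⟨hσ, hτ⟩ | ⟨hσ, hτ⟩
  all_goals
    simp [hσ, hτ, nonzeroAtInversions, Fin.forall_fin_succ, det_fin_three, det_fin_two]
    grind

theorem mem_bruhatChart_four_iff_of_patterns321_eq_singleton {i j k : Fin 4}
    (h : patterns321 σ = {(i, j, k)}) :
    L ∈ bruhatChart 4 σ ↔ L k j * L j i ≠ L k i ∧
      ∀ p, p ≠ (k, j) → p ≠ (j, i) → L p.1 p.2 ∈ nonzeroAtInversions σ p := by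
  have words := words_of_patterns321_eq_singleton h
  simp only [List.mem_cons, Prod.mk.injEq, List.not_mem_nil, or_false] at words
  rw [mem_bruhatChart_four_iff]
  rcases words with ⟨hσ, hτ, rfl, rfl, rfl⟩ | ⟨hσ, hτ, rfl, rfl, rfl⟩ | ⟨hσ, hτ, rfl, rfl, rfl⟩ |
    ⟨hσ, hτ, rfl, rfl, rfl⟩ | ⟨hσ, hτ, rfl, rfl, rfl⟩ | ⟨hσ, hτ, rfl, rfl, rfl⟩
  all_goals
    simp [hσ, hτ, nonzeroAtInversions, Fin.forall_fin_succ, det_fin_three, det_fin_two]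
    grind

theorem homotopyDiscrete_bruhatChart_of_patterns321_eq_empty (h321 : patterns321 σ = ∅)
    (h3412 : ⇑σ ≠ ![2, 3, 0, 1]) : HomotopyDiscrete (bruhatChart 4 σ) := by
  have eq_entries : bruhatChart 4 σ =
      {L | (fun p => L p.1 p.2) ∈ Set.univ.pi (nonzeroAtInversions σ)} := by
    ext L
    rw [mem_bruhatChart_four_iff_of_patterns321_eq_empty h321 h3412]
    exact Set.mem_univ_pi.symm
  rw [eq_entries]
  exact (HomotopyDiscrete.setPi (homotopyDiscrete_nonzeroAtInversions σ)).of_entries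

theorem homotopyDiscrete_bruhatChart_of_patterns321_eq_singleton {i j k : Fin 4}
    (h : patterns321 σ = {(i, j, k)}) : HomotopyDiscrete (bruhatChart 4 σ) := by
  have eq_entries : bruhatChart 4 σ = {L | (fun p => L p.1 p.2) ∈
      {v : Fin 4 × Fin 4 → ℝ | v (k, j) * v (j, i) ≠ v (k, i) ∧
        ∀ p, p ≠ (k, j) → p ≠ (j, i) → v p ∈ nonzeroAtInversions σ p}} :=
    Set.ext fun L => mem_bruhatChart_four_iff_of_patterns321_eq_singleton h
  have pattern : (i, j, k) ∈ patterns321 σ := by simp [h]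
  simp only [patterns321, Finset.mem_filter_univ] at pattern
  obtain ⟨hij, hjk, hkj, hji⟩ := pattern
  rw [eq_entries]
  refine (homotopyDiscrete_mul_ne (by simp [hij.ne', hjk.ne']) (by simp [hij.ne'])
    (by simp [hjk.ne]) ?_ (homotopyDiscrete_nonzeroAtInversions σ)).of_entries
  simp [nonzeroAtInversions, (hij.trans hjk).ne', hij.trans hjk, hkj.trans hji]

/-- The lower unitriangular matrix with successive subdiagonals `v 0, v 1, v 2`, then `v 3, v 4`,
then `v 5`. -/
def lowerMatrix (v : Fin 6 → ℝ) : Matrix (Fin 4) (Fin 4) ℝ :=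
  !![1, 0, 0, 0; v 0, 1, 0, 0; v 3, v 1, 1, 0; v 5, v 4, v 2, 1]

theorem lowerMatrix_entries {L : Matrix (Fin 4) (Fin 4) ℝ} (hL : L ∈ Lo1 4) :
    lowerMatrix ![L 1 0, L 2 1, L 3 2, L 2 0, L 3 1, L 3 0] = L := by
  ext i j
  fin_cases i <;> fin_cases j <;> simp [lowerMatrix, hL.1, hL.2]

theorem homotopyDiscrete_bruhatChart_four_of_lowerMatrix {P : (Fin 6 → ℝ) → Prop}
    (mem_iff : ∀ v, lowerMatrix v ∈ bruhatChart 4 σ ↔ P v) (h : HomotopyDiscrete {v | P v}) :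
    HomotopyDiscrete (bruhatChart 4 σ) := by
  have lowerMatrix_eq {L} (hL : L ∈ bruhatChart 4 σ) :=
    lowerMatrix_entries (mem_Lo1_of_eq_one_off_inversions hL.1)
  refine h.of_leftInvOn (f := fun L => ![L 1 0, L 2 1, L 3 2, L 2 0, L 3 1, L 3 0])
    (by fun_prop) (g := lowerMatrix) (by unfold lowerMatrix; fun_prop) (fun L hL => ?_)
    (fun v hv => (mem_iff v).2 hv) fun L hL => lowerMatrix_eq hL
  rwa [Set.mem_ofPred_eq, ← mem_iff, lowerMatrix_eq hL]

-- Here and below, the entries are rescaled by nonvanishing minors of orders one and two, which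
-- turns the conditions into `t ≠ 0` and `K_n ≠ 0`.
theorem homotopyDiscrete_bruhatChart_2301 (hσ : ⇑σ = ![2, 3, 0, 1]) :
    HomotopyDiscrete (bruhatChart 4 σ) := by
  have hτ : ⇑σ.symm = ![2, 3, 0, 1] := by
    revert σ
    decide
  refine homotopyDiscrete_bruhatChart_four_of_lowerMatrix (P := fun v =>
      v 0 = 0 ∧ v 2 = 0 ∧ v 3 ≠ 0 ∧ v 4 ≠ 0 ∧ v 3 * v 4 ≠ v 1 * v 5) (fun v => ?_) ?_
  · rw [mem_bruhatChart_four_iff]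
    simp [hσ, hτ, lowerMatrix, Fin.forall_fin_succ, det_fin_three, det_fin_two]
    grind
  refine (homotopyDiscrete_compl_zero.setProd (homotopyDiscrete_compl_zero.setProd
    (continuant.homotopyDiscrete_ne_zero 2))).of_leftInvOn
    (f := fun v => (v 3, v 4, ![v 1 / v 3, v 5 / v 4]))
    (g := fun ⟨p, q, x⟩ => ![0, x 0 * p, 0, p, q, x 1 * q])
    (by fun_prop (disch := grind)) (by fun_prop) ?_ ?_ ?_
  · intro v hv
    simp only [Set.mem_prod, Set.mem_compl_singleton_iff, Set.mem_ofPred_eq,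
      continuant_fin_two, cons_val] at hv ⊢
    grind
  · rintro ⟨p, q, x⟩ h
    simp only [Set.mem_prod, Set.mem_compl_singleton_iff, Set.mem_ofPred_eq,
      continuant_fin_two, cons_val] at h ⊢
    grind
  · intro v hv
    ext i
    fin_cases i <;> simp only [cons_val, Fin.reduceFinMk, Fin.zero_eta, Fin.mk_one] <;> grind

theorem homotopyDiscrete_bruhatChart_3120 (hσ : ⇑σ = ![3, 1, 2, 0]) :
    HomotopyDiscrete (bruhatChart 4 σ) := by
  have hτ : ⇑σ.symm = ![3, 1, 2, 0] := by
    revert σ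
    decide
  refine homotopyDiscrete_bruhatChart_four_of_lowerMatrix (P := fun v =>
      v 1 = 0 ∧ v 5 ≠ 0 ∧ v 5 ≠ v 2 * v 3 ∧ v 5 - v 2 * v 3 ≠ v 0 * v 4) (fun v => ?_) ?_
  · rw [mem_bruhatChart_four_iff]
    simp [hσ, hτ, lowerMatrix, Fin.forall_fin_succ, det_fin_three, det_fin_two]
    grind
  refine (homotopyDiscrete_compl_zero.setProd ((continuant.homotopyDiscrete_ne_zero 2).setProd
    (continuant.homotopyDiscrete_ne_zero 2))).of_leftInvOn
    (f := fun v => (v 5, ![v 2 / v 5, v 3], ![v 0 / (v 5 - v 2 * v 3), v 4]))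
    (g := fun ⟨p, x, y⟩ =>
      ![y 0 * (p - x 0 * p * x 1), 0, x 0 * p, x 1, y 1, p])
    (by fun_prop (disch := grind)) (by fun_prop) ?_ ?_ ?_
  · intro v hv
    simp only [Set.mem_prod, Set.mem_compl_singleton_iff, Set.mem_ofPred_eq,
      continuant_fin_two, cons_val] at hv ⊢
    grind
  · rintro ⟨p, x, y⟩ h
    simp only [Set.mem_prod, Set.mem_compl_singleton_iff, Set.mem_ofPred_eq,
      continuant_fin_two, cons_val] at h ⊢
    grind
  · intro v hv
    ext i
    fin_cases i <;> simp only [cons_val, Fin.reduceFinMk, Fin.zero_eta, Fin.mk_one] <;> grind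

theorem homotopyDiscrete_bruhatChart_2310 (hσ : ⇑σ = ![2, 3, 1, 0]) :
    HomotopyDiscrete (bruhatChart 4 σ) := by
  have hτ : ⇑σ.symm = ![3, 2, 0, 1] := by
    revert σ
    decide
  refine homotopyDiscrete_bruhatChart_four_of_lowerMatrix (P := fun v =>
      v 0 = 0 ∧ v 4 ≠ 0 ∧ v 3 * v 4 ≠ v 1 * v 5 ∧ v 5 ≠ v 2 * v 3) (fun v => ?_) ?_
  · rw [mem_bruhatChart_four_iff]
    simp [hσ, hτ, lowerMatrix, Fin.forall_fin_succ, det_fin_three, det_fin_two]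
    grind
  refine (homotopyDiscrete_compl_zero.setProd (homotopyDiscrete_compl_zero.setProd
    (continuant.homotopyDiscrete_ne_zero 3))).of_leftInvOn
    (f := fun v => (v 4, v 3 - v 1 * v 5 / v 4,
      ![v 2, v 1 / v 4, -v 5 / (v 3 - v 1 * v 5 / v 4)]))
    (g := fun ⟨p, q, x⟩ => ![0, x 1 * p, x 0, q - x 1 * x 2 * q, p, -x 2 * q])
    (by fun_prop (disch := grind)) (by fun_prop) ?_ ?_ ?_
  · intro v hv
    simp only [Set.mem_prod, Set.mem_compl_singleton_iff, Set.mem_ofPred_eq,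
      continuant_fin_three, cons_val] at hv ⊢
    grind
  · rintro ⟨p, q, x⟩ h
    simp only [Set.mem_prod, Set.mem_compl_singleton_iff, Set.mem_ofPred_eq,
      continuant_fin_three, cons_val] at h ⊢
    grind
  · intro v hv
    ext i
    fin_cases i <;> simp only [cons_val, Fin.reduceFinMk, Fin.zero_eta, Fin.mk_one] <;> grind

theorem homotopyDiscrete_bruhatChart_3201 (hσ : ⇑σ = ![3, 2, 0, 1]) :
    HomotopyDiscrete (bruhatChart 4 σ) := by
  have hτ : ⇑σ.symm = ![2, 3, 1, 0] := by
    revert σ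
    decide
  refine homotopyDiscrete_bruhatChart_four_of_lowerMatrix (P := fun v =>
      v 2 = 0 ∧ v 5 ≠ 0 ∧ v 1 * v 5 ≠ v 3 * v 4 ∧ v 3 ≠ v 0 * v 1) (fun v => ?_) ?_
  · rw [mem_bruhatChart_four_iff]
    simp [hσ, hτ, lowerMatrix, Fin.forall_fin_succ, det_fin_three, det_fin_two]
    grind
  refine (homotopyDiscrete_compl_zero.setProd (homotopyDiscrete_compl_zero.setProd
    (continuant.homotopyDiscrete_ne_zero 3))).of_leftInvOn
    (f := fun v => (v 5, v 1 - v 3 * v 4 / v 5,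
      ![v 0, v 4 / v 5, -v 3 / (v 1 - v 3 * v 4 / v 5)]))
    (g := fun ⟨p, q, x⟩ => ![x 0, q - x 1 * x 2 * q, 0, -x 2 * q, x 1 * p, p])
    (by fun_prop (disch := grind)) (by fun_prop) ?_ ?_ ?_
  · intro v hv
    simp only [Set.mem_prod, Set.mem_compl_singleton_iff, Set.mem_ofPred_eq,
      continuant_fin_three, cons_val] at hv ⊢
    grind
  · rintro ⟨p, q, x⟩ h
    simp only [Set.mem_prod, Set.mem_compl_singleton_iff, Set.mem_ofPred_eq,
      continuant_fin_three, cons_val] at h ⊢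
    grind
  · intro v hv
    ext i
    fin_cases i <;> simp only [cons_val, Fin.reduceFinMk, Fin.zero_eta, Fin.mk_one] <;> grind

theorem homotopyDiscrete_bruhatChart_3210 (hσ : ⇑σ = ![3, 2, 1, 0]) :
    HomotopyDiscrete (bruhatChart 4 σ) := by
  have hτ : ⇑σ.symm = ![3, 2, 1, 0] := by
    revert σ
    decide
  refine homotopyDiscrete_bruhatChart_four_of_lowerMatrix (P := fun v =>
      v 5 ≠ 0 ∧ v 1 * v 5 ≠ v 3 * v 4 ∧
      v 5 - v 2 * v 3 - v 0 * v 4 + v 0 * v 1 * v 2 ≠ 0) (fun v => ?_) ?_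
  · rw [mem_bruhatChart_four_iff]
    simp [hσ, hτ, lowerMatrix, Fin.forall_fin_succ, det_fin_three, det_fin_two]
    grind
  refine (homotopyDiscrete_compl_zero.setProd (homotopyDiscrete_compl_zero.setProd
    (continuant.homotopyDiscrete_ne_zero 4))).of_leftInvOn
    (f := fun v => (v 5, v 1 * v 5 - v 3 * v 4,
      ![-v 0 * (v 1 * v 5 - v 3 * v 4) / v 5, -v 4 / (v 1 * v 5 - v 3 * v 4), v 3, v 2 / v 5]))
    (g := fun ⟨p, q, x⟩ =>
      ![-x 0 * p / q, (q - x 1 * x 2 * q) / p, x 3 * p, x 2, -x 1 * q, p])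
    (by fun_prop (disch := grind)) (by fun_prop (disch := simp_all)) ?_ ?_ ?_
  · intro v hv
    simp only [Set.mem_prod, Set.mem_compl_singleton_iff, Set.mem_ofPred_eq,
      continuant_fin_four, cons_val] at hv ⊢
    grind
  · rintro ⟨p, q, x⟩ h
    simp only [Set.mem_prod, Set.mem_compl_singleton_iff, Set.mem_ofPred_eq,
      continuant_fin_four, cons_val] at h ⊢
    grind
  · intro v hv
    ext i
    fin_cases i <;> simp only [cons_val, Fin.reduceFinMk, Fin.zero_eta, Fin.mk_one] <;> grind

theorem homotopyDiscrete_bruhatChart_four (σ : Equiv.Perm (Fin 4)) :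
    HomotopyDiscrete (bruhatChart 4 σ) := by
  rcases lt_trichotomy (patterns321 σ).card 1 with none | one | many
  · have h321 : patterns321 σ = ∅ := by simpa using none
    by_cases h3412 : ⇑σ = ![2, 3, 0, 1]
    · exact homotopyDiscrete_bruhatChart_2301 h3412
    · exact homotopyDiscrete_bruhatChart_of_patterns321_eq_empty h321 h3412
  · obtain ⟨⟨i, j, k⟩, h⟩ := Finset.card_eq_one.1 one
    exact homotopyDiscrete_bruhatChart_of_patterns321_eq_singleton h
  · have word := word_of_two_le_card_patterns321 many
    simp only [List.mem_cons, List.not_mem_nil, or_false] at word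
    rcases word with h | h | h | h
    · exact homotopyDiscrete_bruhatChart_3120 h
    · exact homotopyDiscrete_bruhatChart_2310 h
    · exact homotopyDiscrete_bruhatChart_3201 h
    · exact homotopyDiscrete_bruhatChart_3210 h

end Four

/-- for every permutation `σ ∈ S₄`, every connected component of
`BL_σ ⊂ Lo¹₄` is contractible. -/
theorem stmt4 (σ : Equiv.Perm (Fin 4)) :
    ∀ L : ↥(BL 4 σ), ContractibleSpace ↥(connectedComponent L) :=
  (homotopyDiscrete_BL_of_bruhatChart
    (homotopyDiscrete_bruhatChart_four σ)).contractibleSpace_connectedComponent
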